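/- Let R be a unique factorization domain, f an algebraically primitive Dirichlet polynomial over R with min-degree m and degree n (m < n, a_m = f(m) ≠ 0, a_n = f(n) ≠ 0), write a_i = f(i), and let p be a prime element of R. Assume: there is an index k₀ with k₀ < m·δ(m,n), a_{k₀} ≠ 0 and p ∤ a_{k₀}; p ∣ a_j for every j in the support of f with j ≥ m·δ(m,n); and for every i < n with a_i ≠ 0 and ν_p(a_i) < ν_p(a_n) one has ρ(m,n)^{ν_p(a_n) − ν_p(a_i)} < n/i as rational numbers. Then for all nonzero elements b_m, …, b_n of R with p ∤ b_{k₀}·b_n, the Dirichlet polynomial g defined by g(i) = a_i·b_i for m ≤ i ≤ n (and g(i) = 0 otherwise) is irreducible over R. -/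

import Mathlib

/-!
The proof is a Newton polygon argument with `log i` as the abscissa of the coefficient at `i`.

Suppose `g = u * v` with `u`, `v` nonconstant, with min-degrees `c₁`, `c₂` and degrees `d₁`, `d₂`,
so that `c₁ c₂ = m` and `d₁ d₂ = n`. Since `g` has the same support as `f`, algebraic primitivity
forces `c₁ < d₁` and `c₂ < d₂` (`min_lt_max_of_factor`). Because `(d₁ / c₁) (d₂ / c₂) = n / m`, one
of the two ratios, say `d₁ / c₁`, is at most `√(n / m)`, hence at most `ρ = ρ(m, n)`.

Reduction modulo `p`: neither factor vanishes mod `p`, since `p ∤ g k₀`. If `k` and `l` are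
the largest indices with `p ∤ u k` and `p ∤ v l`, then `p ∤ g (k l)`, so `k l < m δ(m, n)`; with
`l ≥ c₂` this gives `k < c₁ δ(m, n) ≤ d₁`. Thus `p ∣ u d₁` while `p ∤ u k` for some `k < d₁`.

As `d₁ / k ≤ d₁ / c₁ ≤ ρ`, the last edge of the Newton polygon of `u` has slope at least
`1 / log ρ`. The same then holds for the product (`newton_slope`), which produces an
index `i < n` with `n / i ≤ ρ ^ (ν_p (g n) - ν_p (g i))`, against the slope hypothesis.
-/

namespace DirichletPoly

variable {R : Type*}

/-- A Dirichlet polynomial is an arithmetic function with finite support. -/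
def IsDP [Zero R] (f : ArithmeticFunction R) : Prop := (Function.support ⇑f).Finite

/-- `f` is nonconstant: its support contains some `i ≥ 2`. -/
def Nonconst [Zero R] (f : ArithmeticFunction R) : Prop := ∃ i : ℕ, 2 ≤ i ∧ f i ≠ 0

/-- `f` is irreducible over `R`: it cannot be written as a product of two nonconstant
Dirichlet polynomials with coefficients in `R`. -/
def IrreducibleDP [CommSemiring R] (f : ArithmeticFunction R) : Prop :=
  ¬ ∃ g h : ArithmeticFunction R, IsDP g ∧ IsDP h ∧ Nonconst g ∧ Nonconst h ∧ f = g * h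

/-- `f` is algebraically primitive: the gcd of the elements of its support is `1`. -/
def AlgPrimitive [Zero R] (f : ArithmeticFunction R) : Prop :=
  ∀ d : ℕ, (∀ i : ℕ, f i ≠ 0 → d ∣ i) → d = 1
/-- The rational square root `ρ(m,n)`: the largest quotient `d/c` with `d ∣ n`, `c ∣ m`
and `d/c ≤ √(n/m)`, viewed as a real number. -/
noncomputable def rho (m n : ℕ) : ℝ :=
  sSup {x : ℝ | ∃ c d : ℕ, c ∣ m ∧ d ∣ n ∧ x = (d : ℝ) / (c : ℝ) ∧
    x ≤ Real.sqrt ((n : ℝ) / (m : ℝ))}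

/-- The rational floor `δ(m,n)`: the smallest quotient `d/c` with `d ∣ n`, `c ∣ m`,
`d > c > 0`, viewed as a real number. -/
noncomputable def deltaMN (m n : ℕ) : ℝ :=
  sInf {x : ℝ | ∃ c d : ℕ, c ∣ m ∧ d ∣ n ∧ c < d ∧ 0 < c ∧ x = (d : ℝ) / (c : ℝ)}

/-! ### Coefficients and extreme degrees of a product -/

/-- The coefficient of a product at `i₁ * j₁` is congruent to `u i₁ * v j₁` modulo anything that
divides all the other terms of the convolution. It is used with modulus `0` (extreme coefficients),
`p` (reduction mod `p`) and a power of `p` (Newton polygons). -/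
theorem dvd_mul_apply_sub [CommRing R] (u v : ArithmeticFunction R) {i₁ j₁ : ℕ}
    (hi : 0 < i₁) (hj : 0 < j₁) (q : R)
    (h : ∀ i j : ℕ, i * j = i₁ * j₁ → (i < i₁ ∨ (i₁ < i ∧ j < j₁)) → q ∣ u i * v j) :
    q ∣ (u * v) (i₁ * j₁) - u i₁ * v j₁ := by
  have hmem : (i₁, j₁) ∈ (i₁ * j₁).divisorsAntidiagonal := by
    simp [hi.ne', hj.ne']
  rw [ArithmeticFunction.mul_apply, ← Finset.add_sum_erase _ _ hmem]
  simp only [add_sub_cancel_left]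
  refine Finset.dvd_sum fun x hx => ?_
  rw [Finset.mem_erase, Nat.mem_divisorsAntidiagonal] at hx
  obtain ⟨hne, hprod, -⟩ := hx
  refine h _ _ hprod ?_
  rcases lt_trichotomy x.1 i₁ with hlt | heq | hgt
  · exact Or.inl hlt
  · refine absurd (Prod.ext heq ?_) hne
    rw [heq] at hprod
    exact Nat.eq_of_mul_eq_mul_left hi hprod
  · refine Or.inr ⟨hgt, ?_⟩
    by_contra! hle
    have : i₁ * j₁ < x.1 * x.2 := Nat.mul_lt_mul_of_lt_of_le hgt hle (by omega)
    omega

theorem pos_of_apply_ne_zero [Zero R] {u : ArithmeticFunction R} {i : ℕ} (h : u i ≠ 0) : 0 < i := by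
  rcases Nat.eq_zero_or_pos i with rfl | hi
  · simp at h
  · exact hi

theorem mul_apply_max [CommRing R] {u v : ArithmeticFunction R} {d₁ d₂ : ℕ}
    (hu : u d₁ ≠ 0) (hu' : ∀ i, u i ≠ 0 → i ≤ d₁) (hv : v d₂ ≠ 0) (hv' : ∀ i, v i ≠ 0 → i ≤ d₂) :
    (u * v) (d₁ * d₂) = u d₁ * v d₂ := by
  have hd₁ := pos_of_apply_ne_zero hu
  have hd₂ := pos_of_apply_ne_zero hv
  rw [← sub_eq_zero, ← zero_dvd_iff]
  refine dvd_mul_apply_sub u v hd₁ hd₂ 0 fun i j hij hlt => ?_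
  rw [zero_dvd_iff]
  by_contra hne
  have hi := hu' i (left_ne_zero_of_mul hne)
  have hj := hv' j (right_ne_zero_of_mul hne)
  rcases hlt with hlt | ⟨hgt, -⟩
  · have : i * j < d₁ * d₂ := Nat.mul_lt_mul_of_lt_of_le hlt hj hd₂
    omega
  · omega

theorem mul_apply_min [CommRing R] {u v : ArithmeticFunction R} {c₁ c₂ : ℕ}
    (hu : u c₁ ≠ 0) (hu' : ∀ i, u i ≠ 0 → c₁ ≤ i) (hv : v c₂ ≠ 0) (hv' : ∀ i, v i ≠ 0 → c₂ ≤ i) :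
    (u * v) (c₁ * c₂) = u c₁ * v c₂ := by
  have hc₁ := pos_of_apply_ne_zero hu
  have hc₂ := pos_of_apply_ne_zero hv
  rw [← sub_eq_zero, ← zero_dvd_iff]
  refine dvd_mul_apply_sub u v hc₁ hc₂ 0 fun i j hij hlt => ?_
  rw [zero_dvd_iff]
  by_contra hne
  have hi := hu' i (left_ne_zero_of_mul hne)
  have hj := hv' j (right_ne_zero_of_mul hne)
  omega

theorem exists_min_max [Zero R] {u : ArithmeticFunction R} (hfin : IsDP u) (hu : ∃ i, u i ≠ 0) :
    ∃ c d : ℕ, u c ≠ 0 ∧ (∀ i, u i ≠ 0 → c ≤ i) ∧ u d ≠ 0 ∧ (∀ i, u i ≠ 0 → i ≤ d) := by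
  obtain ⟨d, hd, hd'⟩ := Set.exists_max_image _ (fun i : ℕ => i) hfin hu
  obtain ⟨c, hc, hc'⟩ := Set.exists_min_image _ (fun i : ℕ => i) hfin hu
  exact ⟨c, d, hc, hc', hd, hd'⟩

/-- The support of a product lies in the set of products of indices of the supports. -/
theorem exists_of_mul_apply_ne_zero [CommRing R] {u v : ArithmeticFunction R} {i : ℕ}
    (h : (u * v) i ≠ 0) : ∃ x y, x * y = i ∧ u x ≠ 0 ∧ v y ≠ 0 := by
  rw [ArithmeticFunction.mul_apply] at h
  obtain ⟨x, hx, hne⟩ := Finset.exists_ne_zero_of_sum_ne_zero h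
  exact ⟨x.1, x.2, (Nat.mem_divisorsAntidiagonal.mp hx).1, left_ne_zero_of_mul hne,
    right_ne_zero_of_mul hne⟩

/-- A nonconstant factor of an algebraically primitive Dirichlet polynomial is not a monomial. -/
theorem min_lt_max_of_factor [CommRing R] {u v : ArithmeticFunction R} {c d : ℕ}
    (hprim : AlgPrimitive (u * v)) (hnc : Nonconst u)
    (hmin : ∀ i, u i ≠ 0 → c ≤ i) (hmax : ∀ i, u i ≠ 0 → i ≤ d) : c < d := by
  obtain ⟨i, hi2, hi⟩ := hnc
  by_contra! hle
  have hsupp : ∀ x, u x ≠ 0 → x = i := fun x hx => by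
    have := hmin x hx
    have := hmax x hx
    have := hmin i hi
    have := hmax i hi
    omega
  have : i = 1 := hprim i fun k hk => by
    obtain ⟨x, y, rfl, hx, -⟩ := exists_of_mul_apply_ne_zero hk
    rw [hsupp x hx]
    exact dvd_mul_right _ _
  omega

/-! ### Newton polygons -/

/-- In the plane with abscissa `log i` and ordinate `ν_p (u i)`, this is the leftmost point of the
Newton polygon of `u` touched by its supporting line of slope `1 / log t`. In multiplicative
form, it minimizes `t ^ ν_p (u i) / i`, with ties resolved towards the smallest index. -/
theorem exists_vertex [CommRing R] (p : R) {u : ArithmeticFunction R} (hfin : IsDP u)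
    (hu : ∃ i, u i ≠ 0) (t : ℝ) :
    ∃ i₁, u i₁ ≠ 0 ∧
      (∀ i, u i ≠ 0 → t ^ multiplicity p (u i₁) / (i₁ : ℝ) ≤ t ^ multiplicity p (u i) / (i : ℝ)) ∧
      (∀ i, u i ≠ 0 → i < i₁ →
        t ^ multiplicity p (u i₁) / (i₁ : ℝ) < t ^ multiplicity p (u i) / (i : ℝ)) := by
  obtain ⟨i₁, hi₁, hmin⟩ := Set.exists_min_image _
    (fun i : ℕ => toLex (t ^ multiplicity p (u i) / (i : ℝ), i)) hfin hu
  refine ⟨i₁, hi₁, fun i hi => ?_, fun i hi hlt => ?_⟩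
  · exact (Prod.Lex.toLex_le_toLex'.mp (hmin i hi)).1
  · obtain ⟨h1, h2⟩ := Prod.Lex.toLex_le_toLex'.mp (hmin i hi)
    exact lt_of_le_of_ne h1 fun h => absurd (h2 h) (by simpa using hlt)

/-- If the Newton polygon of `u` ends with slope at least `1 / log t`, as witnessed by an index
`k < d₁`, then so does the Newton polygon of `u * v`. The number `s` is the valuation of the
coefficient at `I`, of which only the upper bound `ν_p ≤ s` is recorded. -/
theorem newton_slope [CommRing R] [IsDomain R] [UniqueFactorizationMonoid R] {p : R} (hp : Prime p)
    {u v : ArithmeticFunction R} (hufin : IsDP u) (hvfin : IsDP v) {t : ℝ} (ht : 1 < t)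
    {k d₁ d₂ : ℕ} (hk : u k ≠ 0) (hkd : k < d₁)
    (hu : u d₁ ≠ 0) (hu' : ∀ i, u i ≠ 0 → i ≤ d₁) (hv : v d₂ ≠ 0) (hv' : ∀ i, v i ≠ 0 → i ≤ d₂)
    (hle : t ^ multiplicity p (u k) / (k : ℝ) ≤ t ^ multiplicity p (u d₁) / (d₁ : ℝ)) :
    ∃ I s : ℕ, 0 < I ∧ I < d₁ * d₂ ∧ ¬ p ^ (s + 1) ∣ (u * v) I ∧
      t ^ s / (I : ℝ) ≤ t ^ (multiplicity p (u d₁ * v d₂)) / ((d₁ * d₂ : ℕ) : ℝ) := by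
  have ht0 : 0 < t := by linarith
  have hmul : ∀ i j, u i * v j ≠ 0 →
      multiplicity p (u i * v j) = multiplicity p (u i) + multiplicity p (v j) := fun i j h =>
    multiplicity_mul hp (.of_prime_left hp h)
  have hweight : ∀ i j, u i * v j ≠ 0 →
      t ^ multiplicity p (u i * v j) / ((i * j : ℕ) : ℝ) =
        t ^ multiplicity p (u i) / (i : ℝ) * (t ^ multiplicity p (v j) / (j : ℝ)) := by
    intro i j h
    rw [hmul i j h, pow_add, Nat.cast_mul, mul_div_mul_comm]
  have hpos : ∀ {w : ArithmeticFunction R} {i : ℕ}, w i ≠ 0 →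
      0 < t ^ multiplicity p (w i) / (i : ℝ) := by
    intro w i h
    have : (0 : ℝ) < i := by exact_mod_cast pos_of_apply_ne_zero h
    positivity
  obtain ⟨i₁, hi₁, hi₁le, hi₁lt⟩ := exists_vertex p hufin ⟨_, hu⟩ t
  obtain ⟨j₁, hj₁, hj₁le, hj₁lt⟩ := exists_vertex p hvfin ⟨_, hv⟩ t
  have hi₁pos := pos_of_apply_ne_zero hi₁
  have hj₁pos := pos_of_apply_ne_zero hj₁
  have hne₁ : u i₁ * v j₁ ≠ 0 := mul_ne_zero hi₁ hj₁
  have hi₁d : i₁ < d₁ := by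
    refine lt_of_le_of_ne (hu' _ hi₁) fun h => ?_
    subst h
    exact absurd (hi₁lt k hk hkd) (not_lt.mpr hle)
  refine ⟨i₁ * j₁, multiplicity p (u i₁ * v j₁), by positivity,
    Nat.mul_lt_mul_of_lt_of_le hi₁d (hv' _ hj₁) (pos_of_apply_ne_zero hv), ?_, ?_⟩
  · intro hdvd
    have hsub := dvd_mul_apply_sub u v hi₁pos hj₁pos
      (p ^ (multiplicity p (u i₁ * v j₁) + 1)) fun i j hij hlt => ?_
    · have h := (dvd_sub_right hdvd).mp hsub
      rw [(FiniteMultiplicity.of_prime_left hp hne₁).pow_dvd_iff_le_multiplicity] at h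
      omega
    · by_cases hne : u i * v j = 0
      · rw [hne]
        exact dvd_zero _
      have hui := left_ne_zero_of_mul hne
      have hvj := right_ne_zero_of_mul hne
      rw [(FiniteMultiplicity.of_prime_left hp hne).pow_dvd_iff_le_multiplicity,
        Nat.add_one_le_iff, ← pow_lt_pow_iff_right₀ ht]
      have hIpos : (0 : ℝ) < ((i₁ * j₁ : ℕ) : ℝ) := by positivity
      refine (div_lt_div_iff_of_pos_right hIpos).mp ?_
      rw [hweight _ _ hne₁, ← hij, hweight _ _ hne]
      rcases hlt with hlt | ⟨-, hlt⟩
      · exact mul_lt_mul (hi₁lt i hui hlt) (hj₁le j hvj) (hpos hj₁) (hpos hui).le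
      · exact mul_lt_mul' (hi₁le i hui) (hj₁lt j hvj hlt) (hpos hj₁).le (hpos hui)
  · rw [hweight _ _ hne₁, hweight _ _ (mul_ne_zero hu hv)]
    exact mul_le_mul (hi₁le _ hu) (hj₁le _ hv) (hpos hj₁).le (hpos hu).le

/-! ### Factorizations and the bounds `ρ`, `δ` -/

theorem le_rho {m n c d : ℕ} (hc : c ∣ m) (hd : d ∣ n)
    (h : (d : ℝ) / (c : ℝ) ≤ Real.sqrt ((n : ℝ) / (m : ℝ))) : (d : ℝ) / (c : ℝ) ≤ rho m n := by
  refine le_csSup ⟨Real.sqrt ((n : ℝ) / (m : ℝ)), ?_⟩ ⟨c, d, hc, hd, rfl, h⟩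
  rintro x ⟨_, _, _, _, _, hx⟩
  exact hx

theorem deltaMN_le {m n c d : ℕ} (hc : c ∣ m) (hd : d ∣ n) (hcd : c < d) (hc0 : 0 < c) :
    deltaMN m n ≤ (d : ℝ) / (c : ℝ) := by
  refine csInf_le ⟨0, ?_⟩ ⟨c, d, hc, hd, hcd, hc0, rfl⟩
  rintro x ⟨_, _, _, _, _, _, rfl⟩
  positivity

/-- The core of the argument: `u` is the factor with the smaller ratio of degree to min-degree, and
the degree and min-degree of the product are written as `d₁ * d₂` and `c₁ * c₂`. The hypotheses
`hdvd` and `hslope` are the assumptions on `f`, transferred to the coefficients of `u * v`. In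
`hslope` the number `s` is an upper bound for a valuation; the premise `1 ≤ ρ` is what allows
replacing the valuation of a coefficient of `f` by such a bound. -/
theorem no_factorization [CommRing R] [IsDomain R] [UniqueFactorizationMonoid R]
    {p : R} (hp : Prime p) {u v : ArithmeticFunction R} (hufin : IsDP u) (hvfin : IsDP v)
    {c₁ c₂ d₁ d₂ : ℕ}
    (huc : u c₁ ≠ 0) (huc' : ∀ i, u i ≠ 0 → c₁ ≤ i) (hud : u d₁ ≠ 0) (hud' : ∀ i, u i ≠ 0 → i ≤ d₁)
    (hvc : v c₂ ≠ 0) (hvc' : ∀ i, v i ≠ 0 → c₂ ≤ i) (hvd : v d₂ ≠ 0) (hvd' : ∀ i, v i ≠ 0 → i ≤ d₂)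
    (hcd : c₁ < d₁) (hratio : d₁ * c₂ ≤ d₂ * c₁)
    {k₀ : ℕ} (hk₀ : ¬ p ∣ (u * v) k₀)
    (hdvd : ∀ j : ℕ, ((c₁ * c₂ : ℕ) : ℝ) * deltaMN (c₁ * c₂) (d₁ * d₂) ≤ (j : ℝ) → p ∣ (u * v) j)
    (hslope : ∀ i s : ℕ, 0 < i → i < d₁ * d₂ → ¬ p ^ (s + 1) ∣ (u * v) i →
      s < multiplicity p (u d₁ * v d₂) → 1 ≤ rho (c₁ * c₂) (d₁ * d₂) →
      rho (c₁ * c₂) (d₁ * d₂) ^ (multiplicity p (u d₁ * v d₂) - s) <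
        ((d₁ * d₂ : ℕ) : ℝ) / (i : ℝ)) : False := by
  have hc₁ := pos_of_apply_ne_zero huc
  have hc₂ := pos_of_apply_ne_zero hvc
  have hd₂ := pos_of_apply_ne_zero hvd
  have hc₁r : (0 : ℝ) < c₁ := by exact_mod_cast hc₁
  have hc₂r : (0 : ℝ) < c₂ := by exact_mod_cast hc₂
  have hd₁r : (0 : ℝ) < d₁ := by exact_mod_cast hc₁.trans hcd
  have hcd' : (1 : ℝ) < (d₁ : ℝ) / c₁ := by
    rw [one_lt_div hc₁r]
    exact_mod_cast hcd
  have hrho : (d₁ : ℝ) / c₁ ≤ rho (c₁ * c₂) (d₁ * d₂) := by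
    refine le_rho (dvd_mul_right _ _) (dvd_mul_right _ _) (Real.le_sqrt_of_sq_le ?_)
    push_cast
    rw [sq, mul_div_mul_comm]
    refine mul_le_mul_of_nonneg_left ?_ (by positivity)
    rw [div_le_div_iff₀ hc₁r hc₂r]
    exact_mod_cast hratio
  have hrho1 := hcd'.trans_le hrho
  -- Neither factor vanishes modulo `p`.
  obtain ⟨x, hx, y, hy⟩ : ∃ x, ¬ p ∣ u x ∧ ∃ y, ¬ p ∣ v y := by
    by_contra! hcon
    refine hk₀ ?_
    rw [ArithmeticFunction.mul_apply]
    refine Finset.dvd_sum fun z _ => ?_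
    by_cases hz : p ∣ u z.1
    · exact hz.mul_right _
    · exact (hcon _ hz _).mul_left _
  have hsub : ∀ w : ArithmeticFunction R, {i | ¬ p ∣ w i} ⊆ Function.support ⇑w := by
    intro w i hi h0
    exact hi (h0 ▸ dvd_zero p)
  obtain ⟨k, hk, hk'⟩ := Set.exists_max_image {i | ¬ p ∣ u i} (fun i : ℕ => i)
    (hufin.subset (hsub u)) ⟨x, hx⟩
  obtain ⟨l, hl, hl'⟩ := Set.exists_max_image {i | ¬ p ∣ v i} (fun i : ℕ => i)
    (hvfin.subset (hsub v)) ⟨y, hy⟩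
  simp only [Set.mem_ofPred_eq] at hk hk' hl hl'
  have hk0 : u k ≠ 0 := hsub u hk
  have hl0 : v l ≠ 0 := hsub v hl
  have hkpos := pos_of_apply_ne_zero hk0
  have hlpos := pos_of_apply_ne_zero hl0
  have hkl : ¬ p ∣ (u * v) (k * l) := by
    intro h
    have := dvd_mul_apply_sub u v hkpos hlpos p fun i j hij hlt => by
      rcases hlt with hlt | ⟨hgt, -⟩
      · have hj : l < j := by
          by_contra! hle
          have : i * j < k * l := Nat.mul_lt_mul_of_lt_of_le hlt hle hlpos
          omega
        exact (by_contra fun h => absurd (hl' j h) (by omega) : p ∣ v j).mul_left _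
      · exact (by_contra fun h => absurd (hk' i h) (by omega) : p ∣ u i).mul_right _
    rcases hp.dvd_or_dvd ((dvd_sub_right h).mp this) with h | h
    · exact hk h
    · exact hl h
  have hkd : k < d₁ := by
    by_contra! hle
    refine hkl (hdvd _ ?_)
    have hδ := deltaMN_le (m := c₁ * c₂) (n := d₁ * d₂) (dvd_mul_right c₁ c₂)
      (dvd_mul_right d₁ d₂) hcd hc₁
    have h1 : ((c₁ * c₂ : ℕ) : ℝ) * deltaMN (c₁ * c₂) (d₁ * d₂) ≤ (d₁ : ℝ) * c₂ := by
      refine (mul_le_mul_of_nonneg_left hδ (by positivity)).trans_eq ?_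
      push_cast
      field_simp
    refine h1.trans ?_
    exact_mod_cast Nat.mul_le_mul hle (hvc' l hl0)
  have hpd : p ∣ u d₁ := by_contra fun h => absurd (hk' d₁ h) (by omega)
  have hmulk : multiplicity p (u k) = 0 := multiplicity_eq_zero.mpr hk
  have hmuld : 1 ≤ multiplicity p (u d₁) := by
    rw [← (FiniteMultiplicity.of_prime_left hp hud).pow_dvd_iff_le_multiplicity]
    simpa using hpd
  have hkr : (0 : ℝ) < k := by exact_mod_cast hkpos
  obtain ⟨I, s, hIpos, hI, hIdvd, hIle⟩ := newton_slope hp hufin hvfin hrho1 hk0 hkd hud hud' hvd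
    hvd' (by
      rw [hmulk, pow_zero, div_le_div_iff₀ hkr hd₁r, one_mul]
      calc (d₁ : ℝ) = (d₁ : ℝ) / c₁ * c₁ := by field_simp
        _ ≤ rho (c₁ * c₂) (d₁ * d₂) * k := by
          refine mul_le_mul hrho ?_ hc₁r.le (by linarith)
          exact_mod_cast huc' k hk0
        _ ≤ _ := by
          refine mul_le_mul_of_nonneg_right ?_ hkr.le
          exact le_self_pow₀ hrho1.le (by omega))
  have hIr : (0 : ℝ) < I := by exact_mod_cast hIpos
  have hIr' : (I : ℝ) < ((d₁ * d₂ : ℕ) : ℝ) := by exact_mod_cast hI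
  generalize hN : multiplicity p (u d₁ * v d₂) = N at *
  generalize rho (c₁ * c₂) (d₁ * d₂) = t at *
  generalize ((d₁ * d₂ : ℕ) : ℝ) = n at *
  have ht0 : 0 < t := by linarith
  rw [div_le_div_iff₀ hIr (hIr.trans hIr')] at hIle
  have hsN : s < N := by
    rw [← pow_lt_pow_iff_right₀ hrho1]
    by_contra! hle
    have h1 : t ^ N * (I : ℝ) ≤ t ^ s * I := mul_le_mul_of_nonneg_right hle hIr.le
    have h2 : t ^ s * (I : ℝ) < t ^ s * n := mul_lt_mul_of_pos_left hIr' (by positivity)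
    linarith
  have h := hslope I s hIpos hI hIdvd hsN hrho1.le
  rw [lt_div_iff₀ hIr] at h
  have h3 : t ^ s * (t ^ (N - s) * I) < t ^ s * n := mul_lt_mul_of_pos_left h (by positivity)
  rw [← mul_assoc, ← pow_add, Nat.add_sub_cancel' hsN.le] at h3
  linarith

/-- Filaseta-type criterion. Here `ν i` is the `p`-adic valuation of
the coefficient `f i`. -/
theorem filaseta_irreducible
    [CommRing R] [IsDomain R] [UniqueFactorizationMonoid R]
    (f : ArithmeticFunction R) (hfin : IsDP f) (hprim : AlgPrimitive f)
    (m n : ℕ) (hmn : m < n)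
    (hmin : f m ≠ 0) (hmin' : ∀ i : ℕ, i < m → f i = 0)
    (hdeg : f n ≠ 0) (hdeg' : ∀ i : ℕ, n < i → f i = 0)
    (p : R) (hp : Prime p)
    (ν : ℕ → ℕ) (hν : ∀ i : ℕ, f i ≠ 0 → p ^ ν i ∣ f i ∧ ¬ p ^ (ν i + 1) ∣ f i)
    (k₀ : ℕ) (hk₀ : (k₀ : ℝ) < (m : ℝ) * deltaMN m n) (hk₀ne : f k₀ ≠ 0)
    (hk₀p : ¬ p ∣ f k₀)
    (hdvd : ∀ j : ℕ, f j ≠ 0 → (m : ℝ) * deltaMN m n ≤ (j : ℝ) → p ∣ f j)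
    (hslope : ∀ i : ℕ, i < n → f i ≠ 0 → ν i < ν n →
      rho m n ^ (ν n - ν i) < (n : ℝ) / (i : ℝ)) :
    ∀ b : ℕ → R, (∀ i : ℕ, m ≤ i → i ≤ n → b i ≠ 0) → ¬ p ∣ b k₀ * b n →
      ∀ g : ArithmeticFunction R,
        (∀ i : ℕ, m ≤ i → i ≤ n → g i = f i * b i) →
        (∀ i : ℕ, i < m → g i = 0) → (∀ i : ℕ, n < i → g i = 0) →
        IrreducibleDP g := by
  rintro b hb hpb g hg hglt hggt ⟨u, v, hufin, hvfin, hunc, hvnc, huv⟩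
  have hsupp : ∀ i, f i ≠ 0 → m ≤ i ∧ i ≤ n := fun i hi =>
    ⟨not_lt.mp fun h => hi (hmin' i h), not_lt.mp fun h => hi (hdeg' i h)⟩
  have hgf : ∀ i, f i ∣ g i := by
    intro i
    rcases lt_or_ge i m with h | h
    · simp [hglt i h]
    rcases lt_or_ge n i with h' | h'
    · simp [hggt i h']
    · exact ⟨b i, hg i h h'⟩
  have hgne : ∀ i, g i ≠ 0 ↔ f i ≠ 0 := by
    refine fun i => ⟨fun h h0 => h (zero_dvd_iff.mp (h0 ▸ hgf i)), fun h => ?_⟩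
    obtain ⟨h1, h2⟩ := hsupp i h
    rw [hg i h1 h2]
    exact mul_ne_zero h (hb i h1 h2)
  have hgprim : AlgPrimitive g := fun d hd => hprim d fun i hi => hd i ((hgne i).mpr hi)
  obtain ⟨c₁, d₁, huc, huc', hud, hud'⟩ := exists_min_max hufin (hunc.imp fun _ h => h.2)
  obtain ⟨c₂, d₂, hvc, hvc', hvd, hvd'⟩ := exists_min_max hvfin (hvnc.imp fun _ h => h.2)
  have hmax := mul_apply_max hud hud' hvd hvd'
  have hminc := mul_apply_min huc huc' hvc hvc'
  rw [← huv] at hmax hminc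
  have hcd₁ : c₁ < d₁ := min_lt_max_of_factor (huv ▸ hgprim) hunc huc' hud'
  have hcd₂ : c₂ < d₂ := min_lt_max_of_factor (mul_comm u v ▸ huv ▸ hgprim) hvnc hvc' hvd'
  have hn : d₁ * d₂ = n := by
    refine le_antisymm ?_ ?_
    · exact (hsupp _ ((hgne _).mp (hmax ▸ mul_ne_zero hud hvd))).2
    · obtain ⟨x, y, rfl, hx, hy⟩ := exists_of_mul_apply_ne_zero (huv ▸ (hgne n).mpr hdeg)
      exact Nat.mul_le_mul (hud' x hx) (hvd' y hy)
  have hm : c₁ * c₂ = m := by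
    refine le_antisymm ?_ ?_
    · obtain ⟨x, y, rfl, hx, hy⟩ := exists_of_mul_apply_ne_zero (huv ▸ (hgne m).mpr hmin)
      exact Nat.mul_le_mul (huc' x hx) (hvc' y hy)
    · exact (hsupp _ ((hgne _).mp (hminc ▸ mul_ne_zero huc hvc))).1
  have hgk₀ : ¬ p ∣ g k₀ := by
    obtain ⟨h1, h2⟩ := hsupp k₀ hk₀ne
    rw [hg k₀ h1 h2]
    intro h
    rcases hp.dvd_or_dvd h with h | h
    · exact hk₀p h
    · exact hpb (h.mul_right _)
  have hgdvd : ∀ j : ℕ, (m : ℝ) * deltaMN m n ≤ (j : ℝ) → p ∣ g j := by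
    intro j hj
    by_cases h0 : f j = 0
    · exact (h0 ▸ dvd_zero p).trans (hgf j)
    · exact (hdvd j h0 hj).trans (hgf j)
  have hνn : multiplicity p (u d₁ * v d₂) = ν n := by
    rw [← hmax, hn, hg n hmn.le le_rfl]
    obtain ⟨h1, h2⟩ := hν n hdeg
    refine multiplicity_eq_of_dvd_of_not_dvd (h1.mul_right _) fun h => h2 ?_
    exact hp.pow_dvd_of_dvd_mul_right _ (fun h' => hpb (h'.mul_left _)) h
  have hgslope : ∀ i s : ℕ, 0 < i → i < n → ¬ p ^ (s + 1) ∣ g i → s < ν n →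
      1 ≤ rho m n → rho m n ^ (ν n - s) < (n : ℝ) / (i : ℝ) := by
    intro i s _ hin hdvdi hs hr
    have hfi : f i ≠ 0 := (hgne i).mp fun h => hdvdi (h ▸ dvd_zero _)
    have hνi : ν i ≤ s := by
      by_contra! hlt
      exact hdvdi ((pow_dvd_pow p hlt).trans ((hν i hfi).1.trans (hgf i)))
    refine lt_of_le_of_lt ?_ (hslope i hin hfi (hνi.trans_lt hs))
    exact pow_le_pow_right₀ hr (by omega)
  -- `no_factorization` applies to whichever factor has the smaller ratio of degree to min-degree.
  rcases le_total (d₁ * c₂) (d₂ * c₁) with hr | hr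
  · refine no_factorization hp hufin hvfin huc huc' hud hud' hvc hvc' hvd hvd' hcd₁ hr
      (k₀ := k₀) ?_ ?_ ?_
    · rwa [← huv]
    · rwa [hm, hn, ← huv]
    · rwa [hm, hn, ← huv, hνn]
  · have huv' : g = v * u := huv.trans (mul_comm u v)
    refine no_factorization hp hvfin hufin hvc hvc' hvd hvd' huc huc' hud hud' hcd₂ hr
      (k₀ := k₀) ?_ ?_ ?_
    · rwa [← huv']
    · rwa [mul_comm c₂, mul_comm d₂, hm, hn, ← huv']
    · rwa [mul_comm c₂, mul_comm d₂, mul_comm (v d₂), hm, hn, ← huv', hνn]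

end DirichletPoly
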